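/- Let G be a finitely generated virtually abelian group, let S be a finite set generating G as a monoid with weight function ω : S → ℕ₊, and let H be any subgroup of G. Then the weighted growth series of H relative to G, namely ∑_{n≥0} #{h ∈ H : ω(h) = n} zⁿ, is a rational power series. -/

import Mathlib

/-- The weight of a group element `g` with respect to a generating set `S` and a
weight function `ω`: the minimal total weight among all words over `S` representing `g`. -/
noncomputable def wordWeight {G : Type*} [Group G] (S : Set G) (ω : G → ℕ) (g : G) : ℕ :=
  sInf {n | ∃ l : List G, (∀ x ∈ l, x ∈ S) ∧ l.prod = g ∧ (l.map ω).sum = n}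

/-- A formal power series with integer coefficients is rational if it is the quotient
of two integer polynomials. -/
def IsRationalSeries (f : PowerSeries ℤ) : Prop :=
  ∃ p q : Polynomial ℤ, q ≠ 0 ∧ f * (q : PowerSeries ℤ) = (p : PowerSeries ℤ)

/-!
Fix a normal abelian subgroup `N` of finite index. A word in the generators is a path in a finite
graph on `G ⧸ N` whose edges are labelled by `N × ℕ`, the second component being the weight. As
`N` is commutative, Kleene's theorem makes the set of pairs `(z, k)` such that a word of weight `k`
leads from `1` to a given coset, with `N`-part `z`, semilinear. Its lower envelope, the graph of
the weight function on the coset, is then semilinear, because semilinear sets are closed under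
differences, and so is its intersection with `H`.

It remains to count a semilinear set by a weight that is linear on it. Unions of translates of one
finitely generated submonoid are closed under intersection, so inclusion–exclusion reduces to a
single translate minus a part stable under the submonoid. Choosing lexicographically least
representatives identifies this with a lower set of `ℕ ^ r`, which by Dickson's lemma is a finite
disjoint union of translated faces of the orthant.
-/

open Set

open scoped Pointwise IsMulCommutative

section RationalSeries

/-- The rational power series, as a module over the ring of polynomials. -/
def rationalSeries : Submodule (Polynomial ℤ) (PowerSeries ℤ) where
  carrier := {f | IsRationalSeries f}
  zero_mem' := ⟨0, 1, one_ne_zero, by simp⟩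
  add_mem' := by
    rintro f g ⟨p, q, hq, hf⟩ ⟨p', q', hq', hg⟩
    refine ⟨p * q' + p' * q, q * q', mul_ne_zero hq hq', ?_⟩
    push_cast
    linear_combination (q' : PowerSeries ℤ) * hf + (q : PowerSeries ℤ) * hg
  smul_mem' := by
    rintro r f ⟨p, q, hq, hf⟩
    refine ⟨r * p, q, hq, ?_⟩
    rw [Algebra.smul_def, PowerSeries.algebraMap_apply', Polynomial.coe_mul, ← hf, mul_assoc]
    simp

theorem X_pow_mul_mem_rationalSeries {f : PowerSeries ℤ} (k : ℕ) (hf : f ∈ rationalSeries) :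
    PowerSeries.X ^ k * f ∈ rationalSeries := by
  simpa [Algebra.smul_def, PowerSeries.algebraMap_apply'] using
    rationalSeries.smul_mem (Polynomial.X ^ k) hf

theorem X_pow_mem_rationalSeries (k : ℕ) : (PowerSeries.X ^ k : PowerSeries ℤ) ∈ rationalSeries :=
  ⟨Polynomial.X ^ k, 1, one_ne_zero, by simp⟩

theorem mem_rationalSeries_of_eq_X_pow_mul_add {f g : PowerSeries ℤ} {k : ℕ} (hk : k ≠ 0)
    (hg : g ∈ rationalSeries) (hf : f = PowerSeries.X ^ k * f + g) : f ∈ rationalSeries := by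
  obtain ⟨p, q, hq, hgq⟩ := hg
  have h_ne : (1 - Polynomial.X ^ k : Polynomial ℤ) ≠ 0 :=
    sub_ne_zero.2 fun h => by simpa [hk] using congrArg (Polynomial.eval 0) h
  refine ⟨p, (1 - Polynomial.X ^ k) * q, mul_ne_zero h_ne hq, ?_⟩
  push_cast
  linear_combination (q : PowerSeries ℤ) * hf + hgq

end RationalSeries

section GrowthSeries

variable {α β : Type*}

/-- A weight `w` has finite levels on `A` if `A` has finitely many elements of each weight, so
that the growth series of `A` counts honestly. -/
def HasFiniteLevels (w : α → ℕ) (A : Set α) : Prop :=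
  ∀ k, (A ∩ w ⁻¹' {k}).Finite

/-- The growth series of `A` for the weight `w`, whose `k`-th coefficient is the number of
elements of `A` of weight `k`. -/
noncomputable def growthSeries (w : α → ℕ) (A : Set α) : PowerSeries ℤ :=
  PowerSeries.mk fun k => ((A ∩ w ⁻¹' {k}).ncard : ℤ)

variable {w : α → ℕ} {A B : Set α}

theorem HasFiniteLevels.mono (hB : HasFiniteLevels w B) (h : A ⊆ B) : HasFiniteLevels w A :=
  fun k => (hB k).subset (inter_subset_inter_left _ h)

theorem HasFiniteLevels.of_image {f : α → β} {v : β → ℕ} {c : ℕ}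
    (hfA : HasFiniteLevels v (f '' A)) (hf : InjOn f A) (hfw : ∀ a ∈ A, v (f a) = c + w a) :
    HasFiniteLevels w A := by
  intro k
  refine Finite.of_finite_image ((hfA (c + k)).subset ?_) (hf.mono inter_subset_left)
  rintro _ ⟨a, ⟨ha, rfl⟩, rfl⟩
  exact ⟨mem_image_of_mem f ha, hfw a ha⟩

theorem growthSeries_image {f : α → β} {v : β → ℕ} {c : ℕ} (hf : InjOn f A)
    (hfw : ∀ a ∈ A, v (f a) = c + w a) :
    growthSeries v (f '' A) = PowerSeries.X ^ c * growthSeries w A := by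
  have h_level : ∀ k, f '' A ∩ v ⁻¹' {k} = f '' (A ∩ {a | c + w a = k}) := fun k => by
    rw [← image_inter_preimage]
    congr 1
    ext a
    simp +contextual [hfw]
  ext k
  rw [PowerSeries.coeff_X_pow_mul']
  simp only [growthSeries, PowerSeries.coeff_mk]
  rw [h_level, (hf.mono inter_subset_left).ncard_image]
  split_ifs with hk
  · simp only [preimage, mem_singleton_iff, eq_tsub_iff_add_eq_of_le hk, add_comm]
  · have h_empty : {a | c + w a = k} = ∅ :=
      eq_empty_of_forall_notMem fun a ha => hk (Nat.le.intro ha)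
    rw [h_empty, inter_empty, ncard_empty, Nat.cast_zero]

@[simp]
theorem growthSeries_empty : growthSeries w ∅ = 0 := by
  ext k
  simp [growthSeries]

theorem growthSeries_singleton (a : α) : growthSeries w {a} = PowerSeries.X ^ w a := by
  ext k
  rw [PowerSeries.coeff_X_pow]
  split_ifs with hk
  · simp [growthSeries, hk]
  · simp [growthSeries, singleton_inter_eq_empty.2 (show a ∉ w ⁻¹' {k} from Ne.symm hk)]

theorem growthSeries_union_add_inter (hA : HasFiniteLevels w A) (hB : HasFiniteLevels w B) :
    growthSeries w (A ∪ B) + growthSeries w (A ∩ B) = growthSeries w A + growthSeries w B := by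
  ext k
  simp only [growthSeries, map_add, PowerSeries.coeff_mk]
  rw [union_inter_distrib_right, inter_inter_distrib_right]
  exact_mod_cast ncard_union_add_ncard_inter _ _ (hA k) (hB k)

theorem growthSeries_union_of_disjoint (hA : HasFiniteLevels w A) (hB : HasFiniteLevels w B)
    (hAB : Disjoint A B) :
    growthSeries w (A ∪ B) = growthSeries w A + growthSeries w B := by
  rw [← growthSeries_union_add_inter hA hB, hAB.inter_eq, growthSeries_empty, add_zero]

theorem growthSeries_eq_sum_fiber (hA : HasFiniteLevels w A) {g : α → β} {s : Finset β}
    (hg : MapsTo g A s) :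
    growthSeries w A = ∑ y ∈ s, growthSeries w (A ∩ g ⁻¹' {y}) := by
  classical
  ext k
  have h_fib : ∀ y, (A ∩ g ⁻¹' {y} ∩ w ⁻¹' {k}).ncard =
      ((hA k).toFinset.filter fun a => g a = y).card := fun y => by
    rw [← ncard_coe_finset]
    congr 1
    ext a
    simp [and_right_comm]
  simp only [growthSeries, map_sum, PowerSeries.coeff_mk, h_fib, ncard_eq_toFinset_card _ (hA k)]
  exact_mod_cast Finset.card_eq_sum_card_fiberwise fun a ha => hg ((hA k).mem_toFinset.1 ha).1

theorem growthSeries_biUnion_mem_rationalSeries {𝒞 : Set (Set α)} (h𝒞 : InfClosed 𝒞)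
    (h_rat : ∀ A ∈ 𝒞, HasFiniteLevels w A → growthSeries w A ∈ rationalSeries)
    {ι : Type*} (s : Finset ι) {A : ι → Set α} (hA : ∀ i ∈ s, A i ∈ 𝒞)
    (h_fin : HasFiniteLevels w (⋃ i ∈ s, A i)) :
    growthSeries w (⋃ i ∈ s, A i) ∈ rationalSeries := by
  classical
  induction s using Finset.induction_on generalizing A with
  | empty => simp [zero_mem]
  | insert i s _ ih =>
    rw [Finset.set_biUnion_insert] at h_fin ⊢
    have h_fin_i := h_fin.mono subset_union_left
    have h_fin_s := h_fin.mono subset_union_right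
    have hi := hA i (s.mem_insert_self i)
    have hs := fun j hj => hA j (Finset.mem_insert_of_mem hj)
    rw [eq_sub_of_add_eq (growthSeries_union_add_inter h_fin_i h_fin_s)]
    refine sub_mem (add_mem (h_rat _ hi h_fin_i) (ih hs h_fin_s)) ?_
    rw [inter_iUnion₂]
    refine ih (fun j hj => h𝒞 hi (hs j hj)) (h_fin_i.mono ?_)
    exact iUnion₂_subset fun _ _ => inter_subset_left

end GrowthSeries

section LowerSets

theorem exists_forall_mem_iff_inf_mem_of_isLowerSet {α : Type*} [Lattice α] [OrderBot α]
    [WellQuasiOrderedLE α] {D : Set α} (hD : IsLowerSet D) :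
    ∃ J, ∀ x, x ∈ D ↔ x ⊓ J ∈ D := by
  have h_fin : {m | Minimal (· ∈ Dᶜ) m}.Finite :=
    WellQuasiOrderedLE.finite_of_isAntichain (setOfPred_minimal_antichain _)
  refine ⟨h_fin.toFinset.sup id, fun x => ⟨hD inf_le_left, fun hx => ?_⟩⟩
  by_contra hxD
  obtain ⟨m, hmx, hm⟩ := exists_minimal_le_of_wellFoundedLT (· ∈ Dᶜ) x hxD
  exact hm.prop (hD (le_inf hmx (Finset.le_sup (f := id) (h_fin.mem_toFinset.2 hm))) hx)

theorem HasFiniteLevels.map_ne_zero {M : Type*} [AddMonoid M] {w : M →+ ℕ} {A : Set M} {a v : M}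
    (hA : HasFiniteLevels w A) (h_inj : Function.Injective fun n : ℕ => a + n • v)
    (h_mem : ∀ n : ℕ, a + n • v ∈ A) : w v ≠ 0 := fun hv =>
  infinite_of_injective_forall_mem (s := A ∩ w ⁻¹' {w a}) h_inj
    (fun n => ⟨h_mem n, by simp [hv]⟩) (hA (w a))

variable {ι : Type*}

/-- The translate to `y` of the face of the orthant `ι → ℕ` spanned by the coordinates in `s`. -/
def orthantFace (s : Finset ι) (y : ι → ℕ) : Set (ι → ℕ) :=
  {x | y ≤ x ∧ ∀ i ∉ s, x i = y i}

theorem orthantFace_empty (y : ι → ℕ) : orthantFace ∅ y = {y} := by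
  ext x
  simp only [orthantFace, mem_ofPred_eq, mem_singleton_iff]
  exact ⟨fun h => funext fun i => h.2 i (Finset.notMem_empty i), by rintro rfl; simp⟩

theorem preimage_inf_singleton_eq_orthantFace [Fintype ι] {J y : ι → ℕ} (hy : y ≤ J) :
    (· ⊓ J) ⁻¹' {y} = orthantFace {i | y i = J i} y := by
  ext x
  simp only [orthantFace, mem_preimage, mem_singleton_iff, funext_iff, Pi.le_def, mem_ofPred_eq,
    ← forall_and, Pi.inf_apply, Finset.mem_filter_univ]
  refine forall_congr' fun i => ?_
  have := hy i
  lia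

section DecidableEq

variable [DecidableEq ι]

theorem add_nsmul_single_mem_orthantFace {s : Finset ι} {x y : ι → ℕ} {i : ι} (hi : i ∈ s)
    (hx : x ∈ orthantFace s y) (n : ℕ) : x + n • Pi.single i 1 ∈ orthantFace s y := by
  refine ⟨hx.1.trans le_self_add, fun j hj => ?_⟩
  simp [hx.2 j hj, (ne_of_mem_of_not_mem hi hj).symm]

theorem orthantFace_insert {s : Finset ι} {i : ι} (hi : i ∉ s) (y : ι → ℕ) :
    orthantFace (insert i s) y =
      orthantFace s y ∪ (Pi.single i 1 + ·) '' orthantFace (insert i s) y := by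
  refine Subset.antisymm (fun x hx => ?_) (union_subset (fun x hx => ?_) ?_)
  · rcases (hx.1 i).eq_or_lt with hxi | hxi
    · refine Or.inl ⟨hx.1, fun j hj => ?_⟩
      rcases eq_or_ne j i with rfl | hji
      · exact hxi.symm
      · exact hx.2 j (by simp [hj, hji])
    · have h_le : Pi.single i 1 ≤ x := update_le_iff.2 ⟨Nat.one_le_of_lt hxi, by simp⟩
      refine Or.inr ⟨x - Pi.single i 1, ⟨fun j => ?_, fun j hj => ?_⟩, add_tsub_cancel_of_le h_le⟩
      · rcases eq_or_ne j i with rfl | hji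
        · simpa using Nat.le_sub_one_of_lt hxi
        · simpa [hji] using hx.1 j
      · have hji : j ≠ i := by rintro rfl; simp at hj
        simpa [hji] using hx.2 j hj
  · exact ⟨hx.1, fun j hj => hx.2 j fun h => hj (Finset.mem_insert_of_mem h)⟩
  · rintro _ ⟨x, hx, rfl⟩
    simpa [add_comm] using add_nsmul_single_mem_orthantFace (s.mem_insert_self i) hx 1

theorem disjoint_orthantFace_image {s : Finset ι} {i : ι} (hi : i ∉ s) (y : ι → ℕ) :
    Disjoint (orthantFace s y) ((Pi.single i 1 + ·) '' orthantFace (insert i s) y) := by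
  rw [disjoint_left]
  rintro _ h ⟨x, hx, rfl⟩
  have h_ge : y i ≤ x i := hx.1 i
  have h_eq : 1 + x i = y i := by simpa using h.2 i hi
  lia

end DecidableEq

theorem growthSeries_orthantFace_mem_rationalSeries (w : (ι → ℕ) →+ ℕ) (s : Finset ι)
    {y : ι → ℕ} (h_fin : HasFiniteLevels w (orthantFace s y)) :
    growthSeries w (orthantFace s y) ∈ rationalSeries := by
  classical
  induction s using Finset.induction_on with
  | empty =>
    rw [orthantFace_empty, growthSeries_singleton]
    exact X_pow_mem_rationalSeries _
  | insert i s hi ih =>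
    have h_eq := orthantFace_insert hi y
    have h_fin_s := h_fin.mono (h_eq ▸ subset_union_left)
    have h_fin_i := h_fin.mono (h_eq ▸ subset_union_right)
    have h_pos : w (Pi.single i 1) ≠ 0 := h_fin.map_ne_zero (a := y)
      (fun m n h => by simpa using congrFun h i)
      (add_nsmul_single_mem_orthantFace (s.mem_insert_self i) ⟨le_rfl, fun _ _ => rfl⟩)
    refine mem_rationalSeries_of_eq_X_pow_mul_add h_pos (ih h_fin_s) ?_
    rw [← growthSeries_image (add_right_injective _).injOn fun _ _ => map_add w _ _, add_comm,
      ← growthSeries_union_of_disjoint h_fin_s h_fin_i (disjoint_orthantFace_image hi y), ← h_eq]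

theorem growthSeries_mem_rationalSeries_of_isLowerSet [Finite ι] (w : (ι → ℕ) →+ ℕ)
    {D : Set (ι → ℕ)} (hD : IsLowerSet D) (h_fin : HasFiniteLevels w D) :
    growthSeries w D ∈ rationalSeries := by
  classical
  have := Fintype.ofFinite ι
  obtain ⟨J, hJ⟩ := exists_forall_mem_iff_inf_mem_of_isLowerSet hD
  rw [growthSeries_eq_sum_fiber h_fin (s := Finset.Iic J) (g := (· ⊓ J))
    fun x _ => Finset.mem_coe.2 (Finset.mem_Iic.2 inf_le_right)]
  refine sum_mem fun y hy => ?_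
  by_cases hyD : y ∈ D
  · have h_sub : (· ⊓ J) ⁻¹' {y} ⊆ D := by
      rintro x rfl
      exact (hJ x).2 hyD
    rw [inter_eq_right.2 h_sub]
    rw [preimage_inf_singleton_eq_orthantFace (Finset.mem_Iic.1 hy)] at h_sub ⊢
    exact growthSeries_orthantFace_mem_rationalSeries w _ (h_fin.mono h_sub)
  · have h_empty : D ∩ (· ⊓ J) ⁻¹' {y} = ∅ :=
      eq_empty_of_forall_notMem fun x hx => hyD (mem_singleton_iff.1 hx.2 ▸ (hJ x).1 hx.1)
    simp [h_empty, zero_mem]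

end LowerSets

section Semilinear

variable {M : Type*} [AddCommMonoid M]

theorem exists_isLowerSet_bijOn {ι : Type*} [Finite ι] (a : M) (f : (ι → ℕ) →+ M)
    {U : Set M} (hU : ∀ m ∈ U, ∀ v, m + f v ∈ U) :
    ∃ D : Set (ι → ℕ), IsLowerSet D ∧ BijOn (fun v => a + f v) D ((a +ᵥ range f) \ U) := by
  let _ : LinearOrder ι := IsWellOrder.linearOrder WellOrderingRel
  -- Lexicographically least representatives form a lower set because the order is translation
  -- invariant.
  refine ⟨{v | a + f v ∉ U ∧ ∀ u, a + f u = a + f v → toLex v ≤ toLex u}, ?_, ?_, ?_, ?_⟩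
  · rintro v u huv ⟨hvU, hv⟩
    obtain ⟨d, rfl⟩ := exists_add_of_le huv
    refine ⟨fun hu => hvU ?_, fun v' hv' => ?_⟩
    · simpa [add_assoc] using hU _ hu d
    · have h_le := hv (v' + d) (by simp only [map_add, ← add_assoc, hv'])
      exact le_of_add_le_add_right h_le
  · rintro v ⟨hvU, -⟩
    exact ⟨⟨f v, mem_range_self v, rfl⟩, hvU⟩
  · rintro u ⟨-, hu⟩ v ⟨-, hv⟩ huv
    exact toLex.injective (le_antisymm (hu v huv.symm) (hv u huv))
  · rintro _ ⟨⟨_, ⟨v, rfl⟩, rfl⟩, hvU⟩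
    obtain ⟨u, hu⟩ := exists_minimal_of_wellFoundedLT
      (fun x : Lex (ι → ℕ) => a + f (ofLex x) = a + f v) ⟨toLex v, rfl⟩
    refine ⟨ofLex u, ⟨?_, fun v' hv' => ?_⟩, hu.prop⟩
    · rwa [hu.prop]
    · exact not_lt.1 (hu.not_lt (hv'.trans hu.prop))

theorem growthSeries_vadd_range_sdiff_mem_rationalSeries {ι : Type*} [Finite ι]
    (w : M →+ ℕ) (a : M) (f : (ι → ℕ) →+ M) {U : Set M} (hU : ∀ m ∈ U, ∀ v, m + f v ∈ U)
    (h_fin : HasFiniteLevels w ((a +ᵥ range f) \ U)) :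
    growthSeries w ((a +ᵥ range f) \ U) ∈ rationalSeries := by
  obtain ⟨D, hD, h_bij⟩ := exists_isLowerSet_bijOn a f hU
  have hw : ∀ v ∈ D, w (a + f v) = w a + w.comp f v := fun v _ => map_add w _ _
  rw [← h_bij.image_eq] at h_fin ⊢
  rw [growthSeries_image h_bij.injOn hw]
  exact X_pow_mul_mem_rationalSeries _ <|
    growthSeries_mem_rationalSeries_of_isLowerSet _ hD (h_fin.of_image h_bij.injOn hw)

/-- A set is equiperiodic if it is a finite union of translates of one finitely generated
submonoid, that is, of linear sets with the same periods. Unlike linear sets, these are closed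
under intersection. -/
def IsEquiperiodicSet (A : Set M) : Prop :=
  ∃ (B : Set M) (P : AddSubmonoid M), B.Finite ∧ P.FG ∧ A = B + (P : Set M)

theorem isEquiperiodicSet_of_isLinearSet {A : Set M} (hA : IsLinearSet A) :
    IsEquiperiodicSet A := by
  obtain ⟨a, P, hP, rfl⟩ := isLinearSet_iff_exists_fg_eq_vadd.1 hA
  exact ⟨{a}, P, finite_singleton a, hP, (singleton_add ..).symm⟩

theorem IsEquiperiodicSet.growthSeries_mem_rationalSeries {A : Set M} (hA : IsEquiperiodicSet A)
    (w : M →+ ℕ) (h_fin : HasFiniteLevels w A) : growthSeries w A ∈ rationalSeries := by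
  obtain ⟨B, P, hB, hP, rfl⟩ := hA
  obtain ⟨r, f, rfl⟩ := AddSubmonoid.fg_iff_exists_fin_addMonoidHom.1 hP
  rw [AddMonoidHom.coe_mrange] at h_fin ⊢
  induction B, hB using Finite.induction_on with
  | empty => simp [zero_mem]
  | @insert b B _ _ ih =>
    have h_insert : insert b B + range f = (B + range f) ∪ ((b +ᵥ range f) \ (B + range f)) := by
      rw [union_sdiff_self, insert_eq, union_add, union_comm, singleton_add]
      rfl
    rw [h_insert] at h_fin ⊢
    have h_fin_B := h_fin.mono subset_union_left
    have h_fin_b := h_fin.mono subset_union_right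
    rw [growthSeries_union_of_disjoint h_fin_B h_fin_b disjoint_sdiff_right]
    refine add_mem (ih h_fin_B) (growthSeries_vadd_range_sdiff_mem_rationalSeries w b f ?_ h_fin_b)
    rintro _ ⟨b', hb', _, ⟨u, rfl⟩, rfl⟩ v
    exact ⟨b', hb', f (u + v), mem_range_self _, by simp [add_assoc]⟩

theorem exists_finite_ofPred_add_eq_add {P : Type*} [AddCommMonoid P] [PartialOrder P]
    [CanonicallyOrderedAdd P] [WellQuasiOrderedLE P] [IsCancelAdd M] (f g : P →+ M) (a b : M) :
    ∃ B : Set P, B.Finite ∧ {p | a + f p = b + g p} = B + (f.eqLocusM g : Set P) := by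
  refine ⟨{p | Minimal (· ∈ {p | a + f p = b + g p}) p},
    WellQuasiOrderedLE.finite_of_isAntichain (setOfPred_minimal_antichain _), ?_⟩
  refine Subset.antisymm (fun p hp => ?_) ?_
  · obtain ⟨q, hqp, hq⟩ := exists_minimal_le_of_wellFoundedLT (· ∈ {p | a + f p = b + g p}) p hp
    obtain ⟨d, rfl⟩ := exists_add_of_le hqp
    refine ⟨q, hq, d, ?_, rfl⟩
    have hq' : a + f q = b + g q := hq.prop
    rw [mem_ofPred_eq, map_add, map_add, ← add_assoc, ← add_assoc, hq'] at hp
    exact add_left_cancel hp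
  · rintro _ ⟨q, hq, d, hd, rfl⟩
    have hq' : a + f q = b + g q := hq.prop
    have hd' : f d = g d := hd
    simp only [mem_ofPred_eq, map_add, ← add_assoc, hq', hd']

theorem map_eqLocusM_fst_snd {P Q : Type*} [AddCommMonoid P] [AddCommMonoid Q] (f : P →+ M)
    (g : Q →+ M) :
    ((f.comp (.fst P Q)).eqLocusM (g.comp (.snd P Q))).map (f.comp (.fst P Q)) =
      AddMonoidHom.mrange f ⊓ AddMonoidHom.mrange g := by
  ext m
  constructor
  · rintro ⟨p, hp, rfl⟩
    exact ⟨⟨p.1, rfl⟩, p.2, Eq.symm hp⟩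
  · rintro ⟨⟨p, rfl⟩, q, hq⟩
    exact ⟨(p, q), hq.symm, rfl⟩

variable [IsCancelAdd M]

theorem addSubmonoid_fg_inf {P Q : AddSubmonoid M} (hP : P.FG) (hQ : Q.FG) : (P ⊓ Q).FG := by
  obtain ⟨r, f, rfl⟩ := AddSubmonoid.fg_iff_exists_fin_addMonoidHom.1 hP
  obtain ⟨s, g, rfl⟩ := AddSubmonoid.fg_iff_exists_fin_addMonoidHom.1 hQ
  rw [← map_eqLocusM_fst_snd]
  exact (AddSubmonoid.fg_eqLocusM _ _).map _

theorem exists_finite_vadd_inter_vadd {P Q : AddSubmonoid M} (hP : P.FG) (hQ : Q.FG) (a b : M) :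
    ∃ B : Set M, B.Finite ∧
      (a +ᵥ (P : Set M)) ∩ (b +ᵥ (Q : Set M)) = B + ((P ⊓ Q : AddSubmonoid M) : Set M) := by
  obtain ⟨r, f, rfl⟩ := AddSubmonoid.fg_iff_exists_fin_addMonoidHom.1 hP
  obtain ⟨s, g, rfl⟩ := AddSubmonoid.fg_iff_exists_fin_addMonoidHom.1 hQ
  set F := f.comp (.fst (Fin r → ℕ) (Fin s → ℕ))
  set G := g.comp (.snd (Fin r → ℕ) (Fin s → ℕ))
  obtain ⟨B, hB, h_eq⟩ := exists_finite_ofPred_add_eq_add F G a b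
  have h_inter : (a +ᵥ range f) ∩ (b +ᵥ range g) = a +ᵥ F '' {p | a + F p = b + G p} := by
    ext m
    constructor
    · rintro ⟨⟨_, ⟨u, rfl⟩, rfl⟩, _, ⟨v, rfl⟩, huv⟩
      exact ⟨f u, ⟨(u, v), huv.symm, rfl⟩, rfl⟩
    · rintro ⟨_, ⟨⟨u, v⟩, huv, rfl⟩, rfl⟩
      exact ⟨⟨f u, mem_range_self u, rfl⟩, g v, mem_range_self v, huv.symm⟩
  refine ⟨a +ᵥ F '' B, (hB.image F).vadd_set, ?_⟩
  rw [AddMonoidHom.coe_mrange, AddMonoidHom.coe_mrange, h_inter, h_eq, image_add,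
    ← map_eqLocusM_fst_snd, AddSubmonoid.coe_map, vadd_add_assoc]

theorem IsEquiperiodicSet.inter {A A' : Set M} (hA : IsEquiperiodicSet A)
    (hA' : IsEquiperiodicSet A') : IsEquiperiodicSet (A ∩ A') := by
  obtain ⟨B, P, hB, hP, rfl⟩ := hA
  obtain ⟨C, Q, hC, hQ, rfl⟩ := hA'
  choose D hD h_eq using exists_finite_vadd_inter_vadd hP hQ
  refine ⟨⋃ c ∈ C, ⋃ b ∈ B, D b c, P ⊓ Q, hC.biUnion fun c _ => hB.biUnion fun b _ => hD b c,
    addSubmonoid_fg_inf hP hQ, ?_⟩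
  have h_translates : ∀ (X : Set M) (R : AddSubmonoid M),
      X + (R : Set M) = ⋃ x ∈ X, x +ᵥ (R : Set M) := fun X R => (iUnion_vadd_set X (R : Set M)).symm
  simp only [iUnion_add, ← h_eq, h_translates B, h_translates C, inter_iUnion₂, iUnion₂_inter]

theorem growthSeries_mem_rationalSeries_of_isSemilinearSet (w : M →+ ℕ) {A : Set M}
    (hA : IsSemilinearSet A) (h_fin : HasFiniteLevels w A) :
    growthSeries w A ∈ rationalSeries := by
  obtain ⟨S, hS, rfl⟩ := isSemilinearSet_iff.1 hA
  rw [sUnion_eq_biUnion] at h_fin ⊢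
  exact growthSeries_biUnion_mem_rationalSeries (𝒞 := {A | IsEquiperiodicSet A})
    (fun _ hA _ hB => hA.inter hB) (fun _ hA h => hA.growthSeries_mem_rationalSeries w h) S
    (fun A hA => isEquiperiodicSet_of_isLinearSet (hS A hA)) h_fin

end Semilinear

section Paths

variable {M Q : Type*} [AddCommMonoid M]

/-- `IsPathSum E K i j m` states that `m` is the sum of the labels along a nonempty path from `i`
to `j` whose interior vertices lie in `K`, an edge from `i` to `j` carrying any label in `E i j`. -/
inductive IsPathSum (E : Q → Q → Set M) (K : Set Q) : Q → Q → M → Prop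
  | edge {i j m} : m ∈ E i j → IsPathSum E K i j m
  | cons {i k j m m'} : m ∈ E i k → k ∈ K → IsPathSum E K k j m' → IsPathSum E K i j (m + m')

variable {E : Q → Q → Set M} {K L : Set Q} {i j k q : Q} {m m' : M}

namespace IsPathSum

theorem mono (hKL : K ⊆ L) (h : IsPathSum E K i j m) : IsPathSum E L i j m := by
  induction h with
  | edge hm => exact .edge hm
  | cons hm hk _ ih => exact .cons hm (hKL hk) ih

theorem trans (h : IsPathSum E K i k m) (hk : k ∈ K) (h' : IsPathSum E K k j m') :
    IsPathSum E K i j (m + m') := by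
  induction h with
  | edge hm => exact .cons hm hk h'
  | cons hm hk' _ ih =>
    rw [add_assoc]
    exact .cons hm hk' (ih hk h')

theorem add_mem_closure (h : IsPathSum E K i q m) (hq : q ∈ K)
    (hm' : m' ∈ AddSubmonoid.closure {m | IsPathSum E K q q m}) : IsPathSum E K i q (m + m') := by
  induction hm' using AddSubmonoid.closure_induction generalizing m with
  | mem x hx => exact h.trans hq hx
  | zero => rwa [add_zero]
  | add x y _ _ hx hy =>
    rw [← add_assoc]
    exact hy (hx h)

theorem of_insert (h : IsPathSum E (insert q K) i j m) :
    IsPathSum E K i j m ∨ m ∈ {m | IsPathSum E K i q m} +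
      (AddSubmonoid.closure {m | IsPathSum E K q q m} : Set M) + {m | IsPathSum E K q j m} := by
  induction h with
  | edge hm => exact .inl (.edge hm)
  | @cons i k j m m' hm hk _ ih =>
    rcases hk, ih with ⟨rfl | hk, ih | ⟨_, ⟨a, ha, b, hb, rfl⟩, c, hc, rfl⟩⟩
    · exact .inr ⟨m + 0, ⟨m, .edge hm, 0, zero_mem _, rfl⟩, m', ih, by simp⟩
    · refine .inr ⟨m + (a + b), ⟨m, .edge hm, a + b, ?_, rfl⟩, c, hc, by simp [add_assoc]⟩
      exact add_mem (AddSubmonoid.subset_closure ha) hb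
    · exact .inl (.cons hm hk ih)
    · exact .inr ⟨m + a + b, ⟨m + a, .cons hm hk ha, b, hb, rfl⟩, c, hc, by simp [add_assoc]⟩

end IsPathSum

theorem ofPred_isPathSum_empty : {m | IsPathSum E ∅ i j m} = E i j := by
  ext m
  refine ⟨fun h => ?_, .edge⟩
  cases h with
  | edge hm => exact hm
  | cons _ hk _ => exact absurd hk (notMem_empty _)

theorem ofPred_isPathSum_insert :
    {m | IsPathSum E (insert q K) i j m} = {m | IsPathSum E K i j m} ∪
      ({m | IsPathSum E K i q m} + (AddSubmonoid.closure {m | IsPathSum E K q q m} : Set M) +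
        {m | IsPathSum E K q j m}) := by
  have h_sub : K ⊆ insert q K := subset_insert q K
  have hq : q ∈ insert q K := mem_insert q K
  refine Subset.antisymm (fun m h => h.of_insert) (union_subset (fun m h => h.mono h_sub) ?_)
  rintro _ ⟨_, ⟨a, ha, b, hb, rfl⟩, c, hc, rfl⟩
  have hb' := AddSubmonoid.closure_mono (fun m h => IsPathSum.mono h_sub h) hb
  exact ((ha.mono h_sub).add_mem_closure hq hb').trans hq (hc.mono h_sub)

-- Kleene's algorithm, adding one admissible interior vertex at a time.
theorem isSemilinearSet_ofPred_isPathSum (hK : K.Finite) (hE : ∀ i j, IsSemilinearSet (E i j))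
    (i j : Q) : IsSemilinearSet {m | IsPathSum E K i j m} := by
  induction K, hK using Finite.induction_on generalizing i j with
  | empty => simpa only [ofPred_isPathSum_empty] using hE i j
  | @insert q K _ _ ih =>
    rw [ofPred_isPathSum_insert]
    exact (ih i j).union (((ih i q).add (ih q q).closure).add (ih q j))

end Paths

section LowerEnvelope

variable {M : Type*} [AddCommMonoid M]

/-- The lower envelope of `V`: its points of least height above each point of `M`. -/
def lowerEnvelope (V : Set (M × ℕ)) : Set (M × ℕ) :=
  {m | IsLeast {k | (m.1, k) ∈ V} m.2}

theorem lowerEnvelope_eq_sdiff (V : Set (M × ℕ)) :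
    lowerEnvelope V = V \ (V + (((0, 1) : M × ℕ) +ᵥ range (AddMonoidHom.inr M ℕ))) := by
  ext ⟨z, k⟩
  refine and_congr_right fun _ => ⟨fun h_le => ?_, fun h_not l hl => ?_⟩
  · rintro ⟨⟨z', l⟩, hl, _, ⟨_, ⟨d, rfl⟩, rfl⟩, h_eq⟩
    obtain ⟨rfl, rfl⟩ : z' = z ∧ l + (1 + d) = k := by simpa using h_eq
    have := h_le hl
    lia
  · by_contra! h_lt
    have h_gap : l + (1 + (k - l - 1)) = k := by lia
    exact h_not ⟨(z, l), hl, _, ⟨_, ⟨k - l - 1, rfl⟩, rfl⟩, by simpa using h_gap⟩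

theorem isSemilinearSet_lowerEnvelope [IsCancelAdd M] {V : Set (M × ℕ)} (hV : IsSemilinearSet V) :
    IsSemilinearSet (lowerEnvelope V) := by
  rw [lowerEnvelope_eq_sdiff, ← image_univ]
  exact hV.sdiff (hV.add ((IsSemilinearSet.univ.image (AddMonoidHom.inr M ℕ)).vadd _))

end LowerEnvelope

section WordWeight

variable {G : Type*} [Group G] {S : Set G} {ω : G → ℕ}

theorem finite_lists_of_length_le {α : Type*} {S : Set α} (hS : S.Finite) (n : ℕ) :
    {l : List α | (∀ x ∈ l, x ∈ S) ∧ l.length ≤ n}.Finite := by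
  have := hS.to_subtype
  refine ((List.finite_length_le S n).image (List.map Subtype.val)).subset ?_
  rintro l ⟨hl, hn⟩
  lift l to List S using hl
  exact ⟨l, by simpa using hn, rfl⟩

theorem exists_word_of_closure_eq_top (hS : Submonoid.closure S = ⊤) (ω : G → ℕ) (g : G) :
    ∃ l : List G, (∀ x ∈ l, x ∈ S) ∧ l.prod = g ∧ (l.map ω).sum = wordWeight S ω g := by
  obtain ⟨l, hl, h_prod⟩ :=
    Submonoid.exists_list_of_mem_closure (hS ▸ Submonoid.mem_top g : g ∈ Submonoid.closure S)
  exact Nat.sInf_mem (s := {n | ∃ l : List G, (∀ x ∈ l, x ∈ S) ∧ l.prod = g ∧ (l.map ω).sum = n})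
    ⟨_, l, hl, h_prod, rfl⟩

theorem hasFiniteLevels_wordWeight (hS_fin : S.Finite) (hS : Submonoid.closure S = ⊤)
    (hω : ∀ s ∈ S, 0 < ω s) (A : Set G) : HasFiniteLevels (wordWeight S ω) A := by
  intro k
  refine ((finite_lists_of_length_le hS_fin k).image List.prod).subset ?_
  rintro g ⟨-, hg⟩
  obtain ⟨l, hl, h_prod, h_weight⟩ := exists_word_of_closure_eq_top hS ω g
  have h_length : l.length ≤ (l.map ω).sum := by
    simpa using List.card_nsmul_le_sum (l.map ω) 1 <|
      List.forall_mem_map.2 fun s hs => hω s (hl s hs)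
  exact ⟨l, ⟨hl, h_length.trans (h_weight.trans hg).le⟩, h_prod⟩

end WordWeight

section VirtuallyAbelian

variable {G : Type*} [Group G] {N : Subgroup G}

/-- The pairs `(z, k)`, with `z` in `N`, such that some word in `L` of weight `k` leads from the
coset representative `a` to `z * b`. -/
def wordValues (N : Subgroup G) (ω : G → ℕ) (L : Set (List G)) (a b : G) :
    Set (Additive N × ℕ) :=
  {m | ∃ l ∈ L, a * l.prod = m.1.toMul * b ∧ (l.map ω).sum = m.2}

theorem wordValues_mono {L L' : Set (List G)} (h : L ⊆ L') {ω : G → ℕ} {a b : G} :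
    wordValues N ω L a b ⊆ wordValues N ω L' a b :=
  fun _ ⟨l, hl, hm⟩ => ⟨l, h hl, hm⟩

theorem append_mem_wordValues {S : Set G} {ω : G → ℕ} {a b c : G}
    {m m' : Additive N × ℕ} (hm : m ∈ wordValues N ω {l | ∀ x ∈ l, x ∈ S} a b)
    (hm' : m' ∈ wordValues N ω {l | ∀ x ∈ l, x ∈ S} b c) :
    m + m' ∈ wordValues N ω {l | ∀ x ∈ l, x ∈ S} a c := by
  obtain ⟨l, hl, h_prod, h_weight⟩ := hm
  obtain ⟨l', hl', h_prod', h_weight'⟩ := hm'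
  refine ⟨l ++ l', fun x hx => (List.mem_append.1 hx).elim (hl x) (hl' x), ?_, ?_⟩
  · rw [List.prod_append, ← mul_assoc, h_prod, mul_assoc, h_prod', ← mul_assoc, Prod.fst_add,
      toMul_add, Subgroup.coe_mul]
  · rw [List.map_append, List.sum_append, h_weight, h_weight', Prod.snd_add]

theorem finite_wordValues {L : Set (List G)} (hL : L.Finite) (ω : G → ℕ) (a b : G) :
    (wordValues N ω L a b).Finite := by
  refine (hL.biUnion (t := fun l => {m | a * l.prod = m.1.toMul * b ∧ (l.map ω).sum = m.2})
    fun l _ => Subsingleton.finite ?_).subset ?_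
  · rintro ⟨z, k⟩ ⟨hz, rfl⟩ ⟨z', k'⟩ ⟨hz', rfl⟩
    have h_eq : (z.toMul : G) = z'.toMul := mul_right_cancel (hz.symm.trans hz')
    exact Prod.ext (Additive.toMul.injective (Subtype.val_injective h_eq)) rfl
  · rintro m ⟨l, hl, hm⟩
    exact mem_biUnion hl hm

theorem isSemilinearSet_addSubgroup {A : Type*} [AddCommGroup A] [AddGroup.FG A]
    (K : AddSubgroup A) : IsSemilinearSet (K : Set A) := by
  have : Module.Finite ℤ A := Module.Finite.iff_addGroup_fg.2 inferInstance
  have hK : K.FG := by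
    simpa using (Submodule.fg_iff_addSubgroup_fg _).1 (IsNoetherian.noetherian K.toIntSubmodule)
  exact IsSemilinearSet.of_fg ((AddSubgroup.fg_iff_addSubmonoid_fg K).1 hK)

theorem wordWeight_eq_of_mem_lowerEnvelope {S : Set G} {ω : G → ℕ} {b : G} {m : Additive N × ℕ}
    (hm : m ∈ lowerEnvelope (wordValues N ω {l | ∀ x ∈ l, x ∈ S} 1 b)) :
    wordWeight S ω (m.1.toMul * b) = m.2 := by
  simpa [wordWeight, wordValues] using IsLeast.csInf_eq hm

theorem exists_mem_lowerEnvelope {S : Set G} (hS : Submonoid.closure S = ⊤) (ω : G → ℕ) (z : N)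
    (b : G) : ∃ k, (Additive.ofMul z, k) ∈
      lowerEnvelope (wordValues N ω {l | ∀ x ∈ l, x ∈ S} 1 b) := by
  obtain ⟨l, hl, h_prod, -⟩ := exists_word_of_closure_eq_top hS ω (z * b : G)
  have h_ne : {k | (Additive.ofMul z, k) ∈ wordValues N ω {l | ∀ x ∈ l, x ∈ S} 1 b}.Nonempty :=
    ⟨_, l, hl, by simpa using h_prod, rfl⟩
  exact ⟨_, Nat.sInf_mem h_ne, fun k hk => Nat.sInf_le hk⟩

theorem exists_section_mul_eq_mul [N.Normal] {t : G ⧸ N → G} (ht : ∀ q, (t q : G ⧸ N) = q)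
    (q : G ⧸ N) (g : G) : ∃ z : N, t q * g = z * t (q * g) := by
  refine ⟨⟨t q * g * (t (q * g))⁻¹, (QuotientGroup.eq_one_iff _).1 ?_⟩, by simp⟩
  simp [ht]

variable [IsMulCommutative N]

theorem mem_wordValues_of_isPathSum {t : G ⧸ N → G} {S : Set G} {ω : G → ℕ} {i j : G ⧸ N}
    {m : Additive N × ℕ}
    (h : IsPathSum (fun i j => wordValues N ω {l | (∀ x ∈ l, x ∈ S) ∧ l.length ≤ 1} (t i) (t j))
      univ i j m) : m ∈ wordValues N ω {l | ∀ x ∈ l, x ∈ S} (t i) (t j) := by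
  induction h with
  | edge hm => exact wordValues_mono (fun _ hl => hl.1) hm
  | cons hm _ _ ih => exact append_mem_wordValues (wordValues_mono (fun _ hl => hl.1) hm) ih

theorem isPathSum_of_mem_wordValues [N.Normal] {t : G ⧸ N → G} (ht : ∀ q, (t q : G ⧸ N) = q)
    {S : Set G} {ω : G → ℕ} {i j : G ⧸ N} {m : Additive N × ℕ}
    (hm : m ∈ wordValues N ω {l | ∀ x ∈ l, x ∈ S} (t i) (t j)) :
    IsPathSum (fun i j => wordValues N ω {l | (∀ x ∈ l, x ∈ S) ∧ l.length ≤ 1} (t i) (t j))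
      univ i j m := by
  obtain ⟨l, hl, h_prod, h_weight⟩ := hm
  induction l generalizing i m with
  | nil => exact .edge ⟨[], by simp, h_prod, h_weight⟩
  | cons s l ih =>
    obtain ⟨z, hz⟩ := exists_section_mul_eq_mul ht i s
    obtain ⟨h_s, h_l⟩ := List.forall_mem_cons.1 hl
    obtain ⟨y, hy⟩ : ∃ y, Additive.ofMul z + y = m.1 := ⟨-Additive.ofMul z + m.1, by simp⟩
    have h_step : (Additive.ofMul z, ω s) ∈ wordValues N ω
        {l | (∀ x ∈ l, x ∈ S) ∧ l.length ≤ 1} (t i) (t (i * s)) :=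
      ⟨[s], ⟨by simpa using h_s, le_rfl⟩, by simpa using hz, by simp⟩
    have h_rest : t (i * s) * l.prod = y.toMul * t j := by
      apply mul_left_cancel (a := (z : G))
      rw [← mul_assoc, ← hz, mul_assoc, ← List.prod_cons, h_prod, ← hy, toMul_add,
        Subgroup.coe_mul, mul_assoc, toMul_ofMul]
    have h_add : (Additive.ofMul z, ω s) + (y, (l.map ω).sum) = m :=
      Prod.ext hy (by simpa using h_weight)
    exact h_add ▸ .cons h_step (mem_univ _) (ih h_l h_rest rfl)

theorem isSemilinearSet_wordValues [N.Normal] [N.FiniteIndex] {t : G ⧸ N → G}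
    (ht : ∀ q, (t q : G ⧸ N) = q) {S : Set G} (hS : S.Finite) (ω : G → ℕ) (i j : G ⧸ N) :
    IsSemilinearSet (wordValues N ω {l | ∀ x ∈ l, x ∈ S} (t i) (t j)) := by
  have h_edges : ∀ i j, IsSemilinearSet
      (wordValues N ω {l | (∀ x ∈ l, x ∈ S) ∧ l.length ≤ 1} (t i) (t j)) := fun i j =>
    .of_finite (finite_wordValues (finite_lists_of_length_le hS 1) ω (t i) (t j))
  rw [show wordValues N ω {l | ∀ x ∈ l, x ∈ S} (t i) (t j) = {m | IsPathSum _ univ i j m} from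
    Set.ext fun m => ⟨isPathSum_of_mem_wordValues ht, mem_wordValues_of_isPathSum⟩]
  exact isSemilinearSet_ofPred_isPathSum finite_univ h_edges i j

theorem isSemilinearSet_ofPred_mul_mem [AddGroup.FG (Additive N)] (H : Subgroup G) (b : G) :
    IsSemilinearSet {z : Additive N | (z.toMul : G) * b ∈ H} := by
  by_cases h_empty : {z : Additive N | (z.toMul : G) * b ∈ H} = ∅
  · rw [h_empty]
    exact .empty
  · obtain ⟨z₀, hz₀⟩ := nonempty_iff_ne_empty.2 h_empty
    have h_eq : {z : Additive N | (z.toMul : G) * b ∈ H} =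
        z₀ +ᵥ ((H.subgroupOf N).toAddSubgroup : Set (Additive N)) := by
      ext z
      have h_iff := H.mul_mem_cancel_right (y := (z.toMul : G) * (z₀.toMul : G)⁻¹) hz₀
      rw [mem_vadd_set_iff_neg_vadd_mem, vadd_eq_add, add_comm]
      simpa [Subgroup.mem_subgroupOf, mul_assoc] using h_iff
    rw [h_eq]
    exact (isSemilinearSet_addSubgroup _).vadd z₀

end VirtuallyAbelian

section RelativeGrowth

variable {G : Type*} [Group G]

theorem exists_section_map_one (N : Subgroup G) [N.Normal] :
    ∃ t : G ⧸ N → G, (∀ q, (t q : G ⧸ N) = q) ∧ t 1 = 1 :=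
  ⟨fun q => q.out * ((1 : G ⧸ N).out)⁻¹, by simp, by simp⟩

theorem bijOn_lowerEnvelope_wordValues {N : Subgroup G} [N.Normal] {S : Set G}
    (hS : Submonoid.closure S = ⊤) (ω : G → ℕ) (H : Subgroup G) (b : G) :
    BijOn (fun m : Additive N × ℕ => (m.1.toMul * b : G))
      (lowerEnvelope (wordValues N ω {l | ∀ x ∈ l, x ∈ S} 1 b) ∩ {m | (m.1.toMul * b : G) ∈ H})
      (H ∩ (QuotientGroup.mk : G → G ⧸ N) ⁻¹' {(b : G ⧸ N)}) := by
  refine ⟨?_, ?_, ?_⟩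
  · rintro m ⟨-, hm⟩
    exact ⟨hm, by simp⟩
  · rintro ⟨z, k⟩ ⟨hm, -⟩ ⟨z', k'⟩ ⟨hm', -⟩ h_eq
    obtain rfl : z = z' := Additive.toMul.injective (Subtype.val_injective (mul_right_cancel h_eq))
    exact Prod.ext rfl (hm.unique hm')
  · rintro g ⟨hgH, hg⟩
    have hgb : g * b⁻¹ ∈ N := by
      rw [← QuotientGroup.eq_one_iff, QuotientGroup.mk_mul, QuotientGroup.mk_inv,
        mem_singleton_iff.1 hg, mul_inv_cancel]
    obtain ⟨k, hk⟩ := exists_mem_lowerEnvelope hS ω ⟨g * b⁻¹, hgb⟩ b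
    exact ⟨_, ⟨hk, by simpa using hgH⟩, by simp⟩

variable {N : Subgroup G} [N.FiniteIndex] [IsMulCommutative N]

theorem growthSeries_wordWeight_inter_coset_mem_rationalSeries [N.Normal]
    {S : Set G} (hS_fin : S.Finite) (hS : Submonoid.closure S = ⊤) {ω : G → ℕ}
    (hω : ∀ s ∈ S, 0 < ω s) (H : Subgroup G) (c : G ⧸ N) :
    growthSeries (wordWeight S ω) (H ∩ (QuotientGroup.mk : G → G ⧸ N) ⁻¹' {c}) ∈
      rationalSeries := by
  have : Group.FG G := Group.fg_iff_monoid_fg.2 ⟨⟨hS_fin.toFinset, by simpa using hS⟩⟩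
  have : Group.FG N := Subgroup.fg_of_index_ne_zero N
  obtain ⟨t, ht, ht_one⟩ := exists_section_map_one N
  set V := lowerEnvelope (wordValues N ω {l | ∀ x ∈ l, x ∈ S} 1 (t c))
  set K := {z : Additive N | (z.toMul : G) * t c ∈ H}
  have h_bij := bijOn_lowerEnvelope_wordValues (N := N) hS ω H (t c)
  have h_weight : ∀ m ∈ V ∩ Prod.fst ⁻¹' K, wordWeight S ω (m.1.toMul * t c : G) =
      0 + AddMonoidHom.snd (Additive N) ℕ m := fun m hm => by
    rw [wordWeight_eq_of_mem_lowerEnvelope hm.1, zero_add, AddMonoidHom.coe_snd]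
  have h_semilinear : IsSemilinearSet (V ∩ Prod.fst ⁻¹' K) := by
    have hV := isSemilinearSet_wordValues ht hS_fin ω 1 c
    rw [ht_one] at hV
    exact (isSemilinearSet_lowerEnvelope hV).inter <|
      (isSemilinearSet_ofPred_mul_mem H (t c)).preimage (AddMonoidHom.fst (Additive N) ℕ)
  rw [ht c] at h_bij
  rw [← h_bij.image_eq, growthSeries_image h_bij.injOn h_weight]
  refine X_pow_mul_mem_rationalSeries _ <|
    growthSeries_mem_rationalSeries_of_isSemilinearSet _ h_semilinear ?_
  exact (hasFiniteLevels_wordWeight hS_fin hS hω _).of_image h_bij.injOn h_weight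

theorem growthSeries_wordWeight_mem_rationalSeries [N.Normal] {S : Set G} (hS_fin : S.Finite)
    (hS : Submonoid.closure S = ⊤) {ω : G → ℕ} (hω : ∀ s ∈ S, 0 < ω s) (H : Subgroup G) :
    growthSeries (wordWeight S ω) (H : Set G) ∈ rationalSeries := by
  have := Fintype.ofFinite (G ⧸ N)
  rw [growthSeries_eq_sum_fiber (hasFiniteLevels_wordWeight hS_fin hS hω _)
    (g := (QuotientGroup.mk : G → G ⧸ N)) fun _ _ => Finset.mem_univ _]
  exact sum_mem fun c _ => growthSeries_wordWeight_inter_coset_mem_rationalSeries hS_fin hS hω H c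

end RelativeGrowth

theorem relative_growth_series_rational_general {G : Type*} [Group G] (N : Subgroup G)
    [N.FiniteIndex] [IsMulCommutative N] (S : Finset G)
    (hS : Submonoid.closure (S : Set G) = ⊤) (ω : G → ℕ) (hω : ∀ s ∈ S, 0 < ω s)
    (H : Subgroup G) :
    IsRationalSeries (PowerSeries.mk fun k =>
      (Nat.card {h : H // wordWeight (S : Set G) ω (h : G) = k} : ℤ)) := by
  have : IsMulCommutative N.normalCore := .of_setLike_mul_comm fun x hx y hy =>
    setLike_mul_comm (N.normalCore_le hx) (N.normalCore_le hy)
  have h_card : ∀ k, Nat.card {h : H // wordWeight (S : Set G) ω (h : G) = k} =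
      ((H : Set G) ∩ wordWeight (S : Set G) ω ⁻¹' {k}).ncard := fun k =>
    Nat.card_congr (Equiv.subtypeSubtypeEquivSubtypeInter (· ∈ H) (wordWeight (S : Set G) ω · = k))
  simp only [h_card]
  exact growthSeries_wordWeight_mem_rationalSeries (N := N.normalCore) S.finite_toSet hS hω H

/-- The relative growth series of any subgroup of a finitely generated virtually abelian
group is rational, for any finite weighted monoid generating set. -/
theorem relative_growth_series_rational {G : Type*} [Group G]
    (n : ℕ) (N : Subgroup G) (hN : N.Normal) (hNfin : N.FiniteIndex)
    (hNiso : Nonempty (N ≃* Multiplicative (Fin n → ℤ)))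
    (S : Finset G) (hS : Submonoid.closure (S : Set G) = ⊤)
    (ω : G → ℕ) (hω : ∀ s ∈ S, 0 < ω s)
    (H : Subgroup G) :
    IsRationalSeries (PowerSeries.mk fun k =>
      (Nat.card {h : H // wordWeight (S : Set G) ω (h : G) = k} : ℤ)) := by
  have : IsMulCommutative N := hNiso.elim fun e =>
    ⟨⟨fun x y => e.injective (by rw [map_mul, map_mul, mul_comm])⟩⟩
  exact relative_growth_series_rational_general N S hS ω hω H
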